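/- Let X be a compact metric space with Lebesgue covering dimension dim(X) = d and let T : X → X be an injective continuous map with dim(P_n) < n/2 for every n ≤ 2d. Then the set of h ∈ C(X,[0,1]) for which the (2d+1)-delay observation map h_0^{2d} is an embedding of X into [0,1]^{2d+1} contains a dense G_δ subset of C(X,[0,1]) with the supremum metric. -/

import Mathlib

open Function Set Topology unitInterval

/-- A topological space `X` has Lebesgue covering dimension at most `m`:
every finite open cover admits a finite open refinement in which no point
belongs to more than `m + 1` sets. -/
def CovDimLE (X : Type*) [TopologicalSpace X] (m : ℕ) : Prop :=
  ∀ (n : ℕ) (U : Fin n → Set X), (∀ i, IsOpen (U i)) → (⋃ i, U i) = univ →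
    ∃ (k : ℕ) (V : Fin k → Set X), (∀ j, IsOpen (V j)) ∧ (⋃ j, V j) = univ ∧
      (∀ j, ∃ i, V j ⊆ U i) ∧ ∀ x : X, Nat.card {j : Fin k // x ∈ V j} ≤ m + 1

/-- The Lebesgue covering dimension of a topological space, as an element of `ℕ∞`
(`⊤` if no finite bound exists). -/
noncomputable def covDim (X : Type*) [TopologicalSpace X] : ℕ∞ :=
  sInf {e : ℕ∞ | ∃ m : ℕ, e = m ∧ CovDimLE X m}

/-- The set of periodic points of `T` of period at most `n`. -/
def periodicLE {X : Type*} (T : X → X) (n : ℕ) : Set X :=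
  {x | ∃ p, 1 ≤ p ∧ p ≤ n ∧ T^[p] x = x}

/-- The `(2d+1)`-delay observation map associated to an observable `h : C(X, [0,1])`
and the dynamics `T : X → X`: `x ↦ (h x, h (T x), …, h (T^{2d} x))`. -/
def delayMap {X : Type*} [TopologicalSpace X] (T : X → X) (d : ℕ)
    (h : C(X, I)) : X → (Fin (2 * d + 1) → I) :=
  fun x i => h (T^[(i : ℕ)] x)

/-!
If the delay maps of `x` and `y` agree, then `h` takes equal values at `T^i x` and `T^i y` for all
`i ≤ 2d`. This matches each point of the orbit segments involved, cut off at the first return, with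
another one: points of two disjoint segments, or, if `y = T^k x`, points of `x, …, T^(2d+k) x`
whose indices differ by `k`, modulo the period. So `h` takes at most `N / 2` values on these `N`
points. A segment of `m` points has its base point in a closed set of dimension less than `m / 2`:
the points of period `m` if `m ≤ 2d`, and `X` otherwise. Base points and values together thus depend
on fewer than `N` parameters, and a generic `h` satisfies none of these systems of `N` equations.

To make this precise, localize near a pair so that the `N` copies of the sets of base points are
disjoint in `X`; by Tietze's theorem `h` can be perturbed on each copy independently. Approximate it
there by averages over partitions of unity whose order is controlled by the dimension. The
coefficients for which the system is solvable lie in finitely many `C¹` images of spaces of smaller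
dimension, so their complement is dense. As countably many such neighborhoods cover all pairs of
distinct points and separating a compact set of pairs is an open condition, Baire's theorem applies.
-/

section CoveringDimension

theorem CovDimLE.of_isClosedEmbedding {Y Z : Type*} [TopologicalSpace Y] [TopologicalSpace Z]
    {m : ℕ} (hZ : CovDimLE Z m) {f : Y → Z} (hf : IsClosedEmbedding f) : CovDimLE Y m := by
  intro n U hUo hUc
  choose W hWo hW using fun i => hf.isInducing.isOpen_iff.1 (hUo i)
  rcases isEmpty_or_nonempty (Fin n) with hn | ⟨⟨i₀⟩⟩
  · exact ⟨0, fun _ => ∅, by simp, by simpa using hUc, by simp, by simp⟩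
  have hcover : ⋃ i, (W i ∪ (range f)ᶜ) = univ := by
    refine eq_univ_of_forall fun z => mem_iUnion.2 ?_
    by_cases hz : z ∈ range f
    · obtain ⟨y, rfl⟩ := hz
      obtain ⟨i, hi⟩ := mem_iUnion.1 (hUc.ge (mem_univ y))
      exact ⟨i, Or.inl (by rwa [← hW i] at hi)⟩
    · exact ⟨i₀, Or.inr hz⟩
  obtain ⟨k, V, hVo, hVc, hVW, hVcard⟩ :=
    hZ n _ (fun i => (hWo i).union hf.isClosed_range.isOpen_compl) hcover
  refine ⟨k, fun j => f ⁻¹' V j, fun j => (hVo j).preimage hf.continuous, ?_, fun j => ?_,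
    fun y => hVcard (f y)⟩
  · rw [← preimage_iUnion, hVc, preimage_univ]
  · obtain ⟨i, hi⟩ := hVW j
    refine ⟨i, fun y hy => ?_⟩
    rw [← hW i]
    exact (hi hy).resolve_right fun h => h ⟨y, rfl⟩

theorem CovDimLE.of_isClosed_subset {X : Type*} [TopologicalSpace X] {s t : Set X} {m : ℕ}
    (ht : CovDimLE t m) (hs : IsClosed s) (hst : s ⊆ t) : CovDimLE s m :=
  ht.of_isClosedEmbedding
    ⟨.inclusion hst, by rw [range_inclusion]; exact hs.preimage continuous_subtype_val⟩

theorem covDimLE_of_covDim_eq {Y : Type*} [TopologicalSpace Y] {m : ℕ} (h : covDim Y = m) :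
    CovDimLE Y m := by
  have hne : {e : ℕ∞ | ∃ n : ℕ, e = n ∧ CovDimLE Y n}.Nonempty := by
    by_contra hempty
    rw [not_nonempty_iff_eq_empty] at hempty
    simp [covDim, hempty] at h
  obtain ⟨n, hn, hYn⟩ := csInf_mem hne
  obtain rfl : m = n := by exact_mod_cast h.symm.trans hn
  exact hYn

theorem CovDimLE.exists_partitionOfUnity {Y ι : Type*} [TopologicalSpace Y] [CompactSpace Y]
    [NormalSpace Y] {m : ℕ} (hY : CovDimLE Y m) {U : ι → Set Y} (hUo : ∀ i, IsOpen (U i))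
    (hUc : ⋃ i, U i = univ) :
    ∃ (k : ℕ) (ψ : PartitionOfUnity (Fin k) Y),
      (∀ y, (support fun v => ψ v y).ncard ≤ m + 1) ∧ ∀ v, ∃ i, support (ψ v) ⊆ U i := by
  obtain ⟨t, ht⟩ := isCompact_univ.elim_finite_subcover U hUo hUc.ge
  obtain ⟨k, V, hVo, hVc, hVU, hVcard⟩ := hY t.card (fun i => U (t.equivFin.symm i))
    (fun i => hUo _) (by
      refine eq_univ_of_forall fun y => ?_
      obtain ⟨i, hi, hy⟩ := mem_iUnion₂.1 (ht (mem_univ y))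
      exact mem_iUnion.2 ⟨t.equivFin ⟨i, hi⟩, by simpa using hy⟩)
  obtain ⟨ψ, hψ⟩ := PartitionOfUnity.exists_isSubordinate isClosed_univ V hVo hVc.ge
  have hsupp : ∀ v, support (ψ v) ⊆ V v := fun v => (subset_tsupport _).trans (hψ v)
  refine ⟨k, ψ, fun y => ?_, fun v => ?_⟩
  · exact (ncard_le_ncard fun v hv => hsupp v hv).trans (hVcard y)
  · obtain ⟨i, hi⟩ := hVU v
    exact ⟨_, (hsupp v).trans hi⟩

theorem CovDimLE.exists_partitionOfUnity_dist_lt {Y E : Type*} [TopologicalSpace Y]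
    [CompactSpace Y] [NormalSpace Y] [PseudoMetricSpace E] {m : ℕ} (hY : CovDimLE Y m)
    {f : Y → E} (hf : Continuous f) {ε : ℝ} (hε : 0 < ε) :
    ∃ (k : ℕ) (ψ : PartitionOfUnity (Fin k) Y) (p : Fin k → Y),
      (∀ y, (support fun v => ψ v y).ncard ≤ m + 1) ∧
        ∀ v y, ψ v y ≠ 0 → dist (f (p v)) (f y) < ε := by
  obtain ⟨k, ψ, hcard, hsub⟩ := hY.exists_partitionOfUnity
    (U := fun p => {y | dist (f p) (f y) < ε})
    (fun p => isOpen_lt (continuous_const.dist hf) continuous_const)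
    (eq_univ_of_forall fun y => mem_iUnion.2 ⟨y, by simpa using hε⟩)
  choose p hp using hsub
  exact ⟨k, ψ, p, hcard, fun v y hvy => hp v hvy⟩

end CoveringDimension

section GenericCoefficients

theorem dense_compl_iUnion_range_of_finrank_lt {ι F : Type*} [Countable ι] {E : ι → Type*}
    [∀ i, NormedAddCommGroup (E i)] [∀ i, NormedSpace ℝ (E i)] [∀ i, FiniteDimensional ℝ (E i)]
    [NormedAddCommGroup F] [NormedSpace ℝ F] [FiniteDimensional ℝ F] {f : ∀ i, E i → F}
    (hf : ∀ i, ContDiff ℝ 1 (f i))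
    (hEF : ∀ i, Module.finrank ℝ (E i) < Module.finrank ℝ F) :
    Dense (⋃ i, range (f i))ᶜ := by
  rcases isEmpty_or_nonempty ι with hι | ⟨⟨i₀⟩⟩
  · simp
  have hpos := hEF i₀
  have hle : dimH (⋃ i, range (f i)) ≤ (Module.finrank ℝ F - 1 : ℕ) := by
    rw [dimH_iUnion]
    exact iSup_le fun i => (hf i).dimH_range_le.trans (Nat.cast_le.2 (Nat.le_sub_one_of_lt (hEF i)))
  exact dense_compl_of_dimH_lt_finrank (hle.trans_lt (Nat.cast_lt.2 (by omega)))

theorem dense_preimage_unitInterval_coe {ι : Type*} [Finite ι] {s : Set (ι → ℝ)} (hs : Dense s) :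
    Dense {c : ι → I | (fun i => (c i : ℝ)) ∈ s} := by
  have hind : IsInducing fun (c : ι → I) i => (c i : ℝ) :=
    .piMap fun _ => .subtypeVal
  have hcube : range (fun (c : ι → I) i => (c i : ℝ)) = closure (univ.pi fun _ => Ioo 0 1) := by
    rw [closure_pi_set, closure_Ioo zero_ne_one]
    exact (range_piMap _).trans (by simp only [Subtype.range_coe])
  have hopen : IsOpen (univ.pi fun _ : ι => Ioo (0 : ℝ) 1) :=
    isOpen_set_pi finite_univ fun _ _ => isOpen_Ioo
  refine hind.dense_iff.2 fun c => ?_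
  have himage : (fun (c : ι → I) i => (c i : ℝ)) '' {c | (fun i => (c i : ℝ)) ∈ s} =
      s ∩ range fun (c : ι → I) i => (c i : ℝ) := image_preimage_eq_inter_range
  rw [himage]
  refine closure_minimal ?_ isClosed_closure (hcube.le (mem_range_self c))
  refine (hs.open_subset_closure_inter hopen).trans (closure_mono ?_)
  rw [inter_comm, hcube]
  exact inter_subset_inter_right _ subset_closure

variable {J C : Type*} {M V : J → Type*}

/-- The solutions `c` of the linear equations `∑ v, a j v * (c ⟨ν, v⟩ - r (q ν)) = 0`, for
`ν = ⟨j, i⟩`, solved for the pivot unknowns `c ⟨ν, v₀ j⟩`. The parameters are the remaining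
coefficients of the equations, divided by the pivot coefficient `a j (v₀ j)` and supported on
`S j`, the values `r`, and the other unknowns. -/
noncomputable def pivotMap [∀ j, DecidableEq (V j)] (q : (Σ j, M j) → C) (v₀ : ∀ j, V j)
    (S : ∀ j, Finset {v // v ≠ v₀ j})
    (p : ((Σ j, S j) → ℝ) × (C → ℝ) × ((Σ ν : Σ j, M j, {v // v ≠ v₀ ν.1}) → ℝ)) :
    (Σ ν : Σ j, M j, V ν.1) → ℝ := fun w =>
  if h : w.2 = v₀ w.1.1 then
    p.2.1 (q w.1) + ∑ u : S w.1.1, p.1 ⟨w.1.1, u⟩ * (p.2.1 (q w.1) - p.2.2 ⟨w.1, u⟩)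
  else p.2.2 ⟨w.1, w.2, h⟩

theorem mem_range_pivotMap [∀ j, Fintype (V j)] [∀ j, DecidableEq (V j)] {q : (Σ j, M j) → C}
    {v₀ : ∀ j, V j} {S : ∀ j, Finset {v // v ≠ v₀ j}} {a : ∀ j, V j → ℝ}
    (ha₀ : ∀ j, a j (v₀ j) ≠ 0) (haS : ∀ j, ∀ v : {v // v ≠ v₀ j}, v ∉ S j → a j v = 0)
    {r : C → ℝ} {c : (Σ ν : Σ j, M j, V ν.1) → ℝ}
    (hc : ∀ ν, ∑ v, a ν.1 v * (c ⟨ν, v⟩ - r (q ν)) = 0) : c ∈ range (pivotMap q v₀ S) := by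
  refine ⟨(fun u => a u.1 u.2 / a u.1 (v₀ u.1), r, fun w => c ⟨w.1, w.2⟩), ?_⟩
  ext ⟨ν, v⟩
  by_cases hv : v = v₀ ν.1
  · subst hv
    have hsum : a ν.1 (v₀ ν.1) * (c ⟨ν, v₀ ν.1⟩ - r (q ν)) +
        ∑ u : S ν.1, a ν.1 u * (c ⟨ν, u⟩ - r (q ν)) = 0 := by
      rw [← hc ν, Fintype.sum_eq_add_sum_subtype_ne _ (v₀ ν.1),
        Finset.sum_coe_sort (S ν.1) fun u => a ν.1 u * (c ⟨ν, u⟩ - r (q ν))]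
      congr 1
      exact Finset.sum_subset (Finset.subset_univ _) fun u _ hu => by simp [haS ν.1 u hu]
    have hpivot : ∑ u : S ν.1, a ν.1 u / a ν.1 (v₀ ν.1) * (r (q ν) - c ⟨ν, u⟩) =
        -(∑ u : S ν.1, a ν.1 u * (c ⟨ν, u⟩ - r (q ν))) / a ν.1 (v₀ ν.1) := by
      rw [← Finset.sum_neg_distrib, Finset.sum_div]
      exact Finset.sum_congr rfl fun u _ => by ring
    simp only [pivotMap, dif_pos, hpivot]
    have := ha₀ ν.1
    field_simp
    linear_combination -hsum
  · simp [pivotMap, hv]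

theorem contDiff_pivotMap [Fintype J] [∀ j, Fintype (M j)] [∀ j, Fintype (V j)]
    [∀ j, DecidableEq (V j)] [Fintype C] (q : (Σ j, M j) → C) (v₀ : ∀ j, V j)
    (S : ∀ j, Finset {v // v ≠ v₀ j}) : ContDiff ℝ 1 (pivotMap q v₀ S) := by
  refine contDiff_pi.2 fun w => ?_
  unfold pivotMap
  split_ifs <;> fun_prop

theorem finrank_pivotMap_domain_lt [Fintype J] [∀ j, Fintype (M j)] [∀ j, Finite (V j)]
    [Fintype C] (v₀ : ∀ j, V j) {S : ∀ j, Finset {v // v ≠ v₀ j}} {D : J → ℕ}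
    (hS : ∀ j, (S j).card ≤ D j) (hD : ∑ j, D j + Fintype.card C < Fintype.card (Σ j, M j)) :
    Module.finrank ℝ
        (((Σ j, S j) → ℝ) × (C → ℝ) × ((Σ ν : Σ j, M j, {v // v ≠ v₀ ν.1}) → ℝ)) <
      Module.finrank ℝ ((Σ ν : Σ j, M j, V ν.1) → ℝ) := by
  classical
  have := fun j => Fintype.ofFinite (V j)
  have hcardS : Fintype.card (Σ j, S j) ≤ ∑ j, D j := by
    rw [Fintype.card_sigma]
    exact Finset.sum_le_sum fun j _ => (Fintype.card_coe _).trans_le (hS j)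
  have hcardV : Fintype.card (Σ ν : Σ j, M j, V ν.1) =
      Fintype.card (Σ ν : Σ j, M j, {v // v ≠ v₀ ν.1}) + Fintype.card (Σ j, M j) := by
    have hV : ∀ j, Fintype.card (V j) = Fintype.card {v // v ≠ v₀ j} + 1 := fun j => by
      rw [Fintype.card_subtype_compl, Fintype.card_subtype_eq, Nat.sub_add_cancel]
      exact Fintype.card_pos_iff.2 ⟨v₀ j⟩
    rw [Fintype.card_sigma, Fintype.card_sigma, Finset.sum_congr rfl fun ν _ => hV ν.1,
      Finset.sum_add_distrib]
    simp only [Finset.sum_const, Finset.card_univ, smul_eq_mul, mul_one]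
  rw [Module.finrank_prod, Module.finrank_prod]
  simp only [Module.finrank_fintype_fun_eq_card]
  omega

theorem dense_setOf_forall_exists_sum_mul_sub_ne_zero [Fintype J] [∀ j, Fintype (M j)]
    [∀ j, Fintype (V j)] [Finite C] (q : (Σ j, M j) → C) {D : J → ℕ}
    (hD : ∑ j, D j + Nat.card C < Fintype.card (Σ j, M j)) :
    Dense {c : (Σ ν : Σ j, M j, V ν.1) → ℝ | ∀ a : ∀ j, V j → ℝ, (∀ j, a j ≠ 0) →
      (∀ j, (support (a j)).ncard ≤ D j + 1) →
      ∀ r : C → ℝ, ∃ ν, ∑ v, a ν.1 v * (c ⟨ν, v⟩ - r (q ν)) ≠ 0} := by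
  classical
  have := Fintype.ofFinite C
  rw [Nat.card_eq_fintype_card] at hD
  let Support := {t : Σ v₀ : ∀ j, V j, ∀ j, Finset {v // v ≠ v₀ j} // ∀ j, (t.2 j).card ≤ D j}
  refine (dense_compl_iUnion_range_of_finrank_lt (ι := Support)
    (fun t => contDiff_pivotMap q t.1.1 t.1.2)
    (fun t => finrank_pivotMap_domain_lt t.1.1 t.2 hD)).mono fun c hc a ha hcard r => ?_
  by_contra! hzero
  choose v₀ hv₀ using fun j => ne_iff.1 (ha j)
  let S : ∀ j, Finset {v // v ≠ v₀ j} := fun j => {v | a j v ≠ 0}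
  have hS : ∀ j, (S j).card ≤ D j := fun j => by
    have himage : Subtype.val '' (S j : Set {v // v ≠ v₀ j}) = support (a j) \ {v₀ j} := by
      ext v
      simp [S, and_comm]
    have hSj : (S j).card + 1 = (support (a j)).ncard := by
      rw [← ncard_coe_finset, ← ncard_image_of_injective _ Subtype.val_injective, himage]
      exact ncard_sdiff_singleton_add_one (hv₀ j)
    have := hcard j
    omega
  exact hc (mem_iUnion.2 ⟨⟨⟨v₀, S⟩, hS⟩,
    mem_range_pivotMap hv₀ (fun j v hv => by simpa [S] using hv) hzero⟩)

end GenericCoefficients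

section GenericFunctions

/-- The function `∑ v, ψ v * c v`, a finite-dimensional family of functions approximating those
close to `c v` on the support of `ψ v`. It is `[0,1]`-valued, like the coefficients `c`. -/
noncomputable def weightedAverage {V Y : Type*} [Fintype V] [TopologicalSpace Y]
    (ψ : PartitionOfUnity V Y) (c : V → I) : C(Y, I) where
  toFun y := ⟨∑ v, ψ v y * c v, by
    rw [← finsum_eq_sum_of_fintype]
    exact ψ.finsum_smul_mem_convex (g := fun v _ => (c v : ℝ)) (mem_univ y)
      (fun v _ => (c v).2) (convex_Icc 0 1)⟩
  continuous_toFun := by fun_prop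

theorem dist_weightedAverage_lt {V Y : Type*} [Fintype V] [TopologicalSpace Y]
    (ψ : PartitionOfUnity V Y) {c : V → I} {y : Y} {t : I} {ε : ℝ}
    (h : ∀ v, ψ v y ≠ 0 → dist (c v) t < ε) : dist (weightedAverage ψ c y) t < ε := by
  change ∑ v, ψ v y * (c v : ℝ) ∈ Metric.ball (t : ℝ) ε
  rw [← finsum_eq_sum_of_fintype]
  exact ψ.finsum_smul_mem_convex (g := fun v _ => (c v : ℝ)) (mem_univ y) h (convex_ball _ _)

theorem sum_mul_sub_eq_weightedAverage_sub {V Y : Type*} [Fintype V] [TopologicalSpace Y]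
    (ψ : PartitionOfUnity V Y) (c : V → I) (y : Y) (t : ℝ) :
    ∑ v, ψ v y * (c v - t) = weightedAverage ψ c y - t := by
  have hsum : ∑ v, ψ v y = 1 := by
    rw [← finsum_eq_sum_of_fintype, ψ.sum_eq_one (mem_univ y)]
  simp only [mul_sub, Finset.sum_sub_distrib, ← Finset.sum_mul, hsum, one_mul]
  rfl

theorem exists_comp_eq_and_dist_le {X Y : Type*} [TopologicalSpace X] [NormalSpace X]
    [CompactSpace X] [TopologicalSpace Y] [CompactSpace Y] {g : C(Y, X)} (hg : IsClosedEmbedding g)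
    (h : C(X, I)) (F : C(Y, I)) :
    ∃ h' : C(X, I), h'.comp g = F ∧ dist h' h ≤ dist F (h.comp g) := by
  let f : C(Y, ℝ) := ⟨fun y => (F y : ℝ) - h (g y), by fun_prop⟩
  have hf : ∀ y, |f y| ≤ dist F (h.comp g) := fun y =>
    ContinuousMap.dist_apply_le_dist (f := F) (g := h.comp g) y
  obtain ⟨G, hG, hGf⟩ :=
    BoundedContinuousFunction.exists_extension_forall_mem_Icc_of_isClosedEmbedding
      (.mkOfCompact f) (fun y => abs_le.1 (hf y))
      (neg_le_self dist_nonneg) hg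
  refine ⟨⟨fun x => projIcc 0 1 zero_le_one ((h x : ℝ) + G x), by fun_prop⟩, ?_, ?_⟩
  · ext y
    have hGy : G (g y) = F y - h (g y) := congrFun hGf y
    simp [hGy]
  · refine (ContinuousMap.dist_le dist_nonneg).2 fun x => ?_
    calc |(projIcc (0 : ℝ) 1 zero_le_one (h x + G x) : ℝ) - h x|
        = |(projIcc (0 : ℝ) 1 zero_le_one (h x + G x) : ℝ) -
            projIcc (0 : ℝ) 1 zero_le_one (h x : ℝ)| := by rw [projIcc_val]
      _ ≤ |(h x : ℝ) + G x - h x| := abs_projIcc_sub_projIcc zero_le_one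
      _ ≤ dist F (h.comp g) := by rw [add_sub_cancel_left]; exact abs_le.2 (hG x)

theorem isOpenMap_comp_isClosedEmbedding {X Y : Type*} [TopologicalSpace X] [NormalSpace X]
    [CompactSpace X] [TopologicalSpace Y] [CompactSpace Y] {g : C(Y, X)}
    (hg : IsClosedEmbedding g) :
    IsOpenMap fun h : C(X, I) => h.comp g := by
  rintro s hs
  refine Metric.isOpen_iff.2 ?_
  rintro _ ⟨h, hh, rfl⟩
  obtain ⟨ε, hε, hball⟩ := Metric.isOpen_iff.1 hs h hh
  refine ⟨ε, hε, fun F hF => ?_⟩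
  obtain ⟨h', hh', hdist⟩ := exists_comp_eq_and_dist_le hg h F
  exact ⟨h', hball (hdist.trans_lt hF), hh'⟩

variable {J C : Type*} {M Y : J → Type*} [Fintype J] [∀ j, Fintype (M j)]
  [∀ j, TopologicalSpace (Y j)] [∀ j, CompactSpace (Y j)] {D : J → ℕ}

theorem dense_setOf_not_factorsThrough_sigma [∀ j, NormalSpace (Y j)] [Finite C]
    (hY : ∀ j, CovDimLE (Y j) (D j)) (q : (Σ j, M j) → C)
    (hD : ∑ j, D j + Nat.card C < Fintype.card (Σ j, M j)) :
    Dense {F : C(Σ ν : Σ j, M j, Y ν.1, I) | ∀ y : ∀ j, Y j,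
      ¬ (fun ν => F ⟨ν, y ν.1⟩).FactorsThrough q} := by
  refine Metric.dense_iff.2 fun F₀ ε hε => ?_
  choose k ψ p hcard hnear using fun j => (hY j).exists_partitionOfUnity_dist_lt
    (f := fun y (i : M j) => F₀ ⟨⟨j, i⟩, y⟩)
    (continuous_pi fun i => F₀.continuous.comp continuous_sigmaMk) (show 0 < ε / 3 by linarith)
  obtain ⟨c, hcnear, hc⟩ := Metric.dense_iff.1 (dense_preimage_unitInterval_coe
    (dense_setOf_forall_exists_sum_mul_sub_ne_zero (V := fun j => Fin (k j)) q hD))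
    (fun w => F₀ ⟨w.1, p w.1.1 w.2⟩) (ε / 3) (by linarith)
  refine ⟨.sigma fun ν => weightedAverage (ψ ν.1) fun v => c ⟨ν, v⟩, ?_, fun y hfactor => ?_⟩
  · refine (ContinuousMap.dist_lt_iff hε).2 ?_
    rintro ⟨ν, y⟩
    refine dist_weightedAverage_lt _ fun v hv => ?_
    have hcv : dist (c ⟨ν, v⟩) (F₀ ⟨ν, p ν.1 v⟩) < ε / 3 :=
      (dist_le_pi_dist c _ ⟨ν, v⟩).trans_lt hcnear
    have hpy : dist (F₀ ⟨ν, p ν.1 v⟩) (F₀ ⟨ν, y⟩) < ε / 3 :=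
      (dist_le_pi_dist _ _ ν.2).trans_lt (hnear ν.1 v y hv)
    linarith [dist_triangle (c ⟨ν, v⟩) (F₀ ⟨ν, p ν.1 v⟩) (F₀ ⟨ν, y⟩)]
  · obtain ⟨r, hr⟩ := (factorsThrough_iff _).1 hfactor
    have hne : ∀ j, (fun v => ψ j v (y j)) ≠ 0 := fun j hzero => by
      have hsum := (ψ j).sum_eq_one (mem_univ (y j))
      simp [congrFun hzero] at hsum
    obtain ⟨ν, hν⟩ := hc _ hne (fun j => hcard j (y j)) (fun t => r t)
    refine hν ?_
    rw [sum_mul_sub_eq_weightedAverage_sub (ψ ν.1) (fun v => c ⟨ν, v⟩), sub_eq_zero]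
    exact congrArg Subtype.val (congrFun hr ν)

theorem dense_setOf_not_factorsThrough {X : Type*} [TopologicalSpace X] [CompactSpace X]
    [T2Space X] [∀ j, T2Space (Y j)] [Finite C] (hY : ∀ j, CovDimLE (Y j) (D j))
    (q : (Σ j, M j) → C) (hD : ∑ j, D j + Nat.card C < Fintype.card (Σ j, M j))
    {g : ∀ ν : Σ j, M j, Y ν.1 → X} (hgc : ∀ ν, Continuous (g ν))
    (hgi : Injective fun w : Σ ν : Σ j, M j, Y ν.1 => g w.1 w.2) :
    Dense {h : C(X, I) | ∀ y : ∀ j, Y j, ¬ (fun ν => h (g ν (y ν.1))).FactorsThrough q} := by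
  have hg := (continuous_sigma hgc).isClosedEmbedding hgi
  exact (dense_setOf_not_factorsThrough_sigma hY q hD).preimage
    (isOpenMap_comp_isClosedEmbedding (g := ⟨_, hg.continuous⟩) hg)

end GenericFunctions

section OrbitSegments

theorem exists_iterate_eq_of_iterate_eq_iterate {X : Type*} {T : X → X}
    (hT : Injective T) {n i j : ℕ} (hi : i ≤ n) (hj : j ≤ n) {x y : X} (hxy : T^[i] x = T^[j] y) :
    ∃ k ≤ n, T^[k] x = y ∨ T^[k] y = x := by
  rcases le_total i j with hij | hij <;> obtain ⟨k, rfl⟩ := Nat.exists_eq_add_of_le hij <;>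
    rw [iterate_add_apply] at hxy
  · exact ⟨k, by omega, Or.inr (hT.iterate i hxy).symm⟩
  · exact ⟨k, by omega, Or.inl (hT.iterate j hxy)⟩

theorem two_mul_card_quot_le {N : Type*} [Finite N] {e : N → N} (he : ∀ ν, e ν ≠ ν) :
    2 * Nat.card (Quot fun ν μ => e ν = μ) ≤ Nat.card N := by
  classical
  have := Fintype.ofFinite N
  have := Fintype.ofFinite (Quot fun ν μ => e ν = μ)
  rw [Nat.card_eq_fintype_card, Nat.card_eq_fintype_card]
  refine Finset.mul_card_image_le_card_of_maps_to (f := Quot.mk _) (s := Finset.univ)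
    (t := Finset.univ) (fun _ _ => Finset.mem_univ _) 2 fun b _ => ?_
  obtain ⟨ν, rfl⟩ := Quot.mk_surjective b
  refine Finset.one_lt_card.2 ⟨e ν, ?_, ν, ?_, he ν⟩
  · simpa using (Quot.sound (r := fun ν μ => e ν = μ) (a := ν) rfl).symm
  · simp

theorem factorsThrough_quotMk {N β : Type*} {e : N → N} {s : N → β} (hs : ∀ ν, s (e ν) = s ν) :
    s.FactorsThrough (Quot.mk fun ν μ => e ν = μ) := fun _ _ h =>
  congrArg (Quot.lift s fun ν μ (hνμ : e ν = μ) => hνμ ▸ (hs ν).symm) h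

theorem exists_isClosed_nhds_pairwise_disjoint_image {X Z J : Type*} {M : J → Type*}
    [TopologicalSpace X] [RegularSpace X] [TopologicalSpace Z] [T2Space Z] [Finite J]
    [∀ j, Finite (M j)] {g : (Σ j, M j) → X → Z} (hg : ∀ ν, Continuous (g ν)) {x : J → X}
    (hx : Injective fun ν => g ν (x ν.1)) :
    ∃ B : J → Set X, (∀ j, B j ∈ 𝓝 (x j)) ∧ (∀ j, IsClosed (B j)) ∧
      Pairwise (Disjoint on fun ν => g ν '' B ν.1) := by
  obtain ⟨U, hU, hdisj⟩ := (finite_range fun ν => g ν (x ν.1)).t2_separation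
  have hpre : ∀ j, ⋂ i, g ⟨j, i⟩ ⁻¹' U (g ⟨j, i⟩ (x j)) ∈ 𝓝 (x j) := fun j =>
    Filter.iInter_mem.2 fun i =>
      ((hU _).2.preimage (hg _)).mem_nhds (hU (g ⟨j, i⟩ (x j))).1
  choose B hBx hBc hBU using fun j => exists_mem_nhds_isClosed_subset (hpre j)
  have himage : ∀ ν, g ν '' B ν.1 ⊆ U (g ν (x ν.1)) := fun ν =>
    image_subset_iff.2 ((hBU ν.1).trans (iInter_subset _ ν.2))
  exact ⟨B, hBx, hBc, fun ν μ hνμ =>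
    (hdisj (mem_range_self ν) (mem_range_self μ) (hx.ne hνμ)).mono (himage ν) (himage μ)⟩

theorem exists_isClosed_nhds_dense_setOf_exists_ne {X J : Type*} {M : J → Type*}
    [TopologicalSpace X] [CompactSpace X] [T2Space X] [Finite J] [Nonempty J]
    [∀ j, Fintype (M j)] {P : J → Set X} (hP : ∀ j, IsClosed (P j)) {D : J → ℕ}
    (hPD : ∀ j, CovDimLE (P j) (D j)) (hD : ∀ j, 2 * D j < Fintype.card (M j))
    {g : (Σ j, M j) → X → X} (hg : ∀ ν, Continuous (g ν)) (hgi : ∀ ν, Injective (g ν)) {x : J → X}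
    (hx : Injective fun ν => g ν (x ν.1)) {e : (Σ j, M j) → Σ j, M j} (he : ∀ ν, e ν ≠ ν) :
    ∃ B : J → Set X, (∀ j, B j ∈ 𝓝 (x j)) ∧ (∀ j, IsClosed (B j)) ∧
      Dense {h : C(X, I) | ∀ z : J → X, (∀ j, z j ∈ B j ∩ P j) →
        ∃ ν, h (g (e ν) (z (e ν).1)) ≠ h (g ν (z ν.1))} := by
  have := Fintype.ofFinite J
  obtain ⟨B, hBx, hBc, hdisj⟩ := exists_isClosed_nhds_pairwise_disjoint_image hg hx
  have hBP : ∀ j, IsClosed (B j ∩ P j) := fun j => (hBc j).inter (hP j)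
  have : ∀ j, CompactSpace ↥(B j ∩ P j) := fun j => isCompact_iff_compactSpace.1 (hBP j).isCompact
  have hcard : ∑ j, D j + Nat.card (Quot fun ν μ => e ν = μ) < Fintype.card (Σ j, M j) := by
    have hsum : 2 * ∑ j, D j < Fintype.card (Σ j, M j) := by
      rw [Finset.mul_sum, Fintype.card_sigma]
      exact Finset.sum_lt_sum_of_nonempty Finset.univ_nonempty fun j _ => hD j
    have hquot := two_mul_card_quot_le he
    rw [Nat.card_eq_fintype_card (α := Σ j, M j)] at hquot
    omega
  have hinj : Injective fun w : Σ ν : Σ j, M j, ↥(B ν.1 ∩ P ν.1) => g w.1 w.2 := by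
    rintro ⟨ν, z⟩ ⟨μ, w⟩ hzw
    obtain rfl : ν = μ := hdisj.eq <| not_disjoint_iff.2
      ⟨g ν z, mem_image_of_mem _ z.2.1, w, w.2.1, hzw.symm⟩
    exact congrArg (Sigma.mk ν) (Subtype.ext (hgi ν hzw))
  refine ⟨B, hBx, hBc, (dense_setOf_not_factorsThrough
    (fun j => (hPD j).of_isClosed_subset (hBP j) inter_subset_right)
    (Quot.mk fun ν μ => e ν = μ) hcard (g := fun ν z => g ν z)
    (fun ν => (hg ν).comp continuous_subtype_val) hinj).mono fun h hh z hz => ?_⟩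
  by_contra! heq
  exact hh (fun j => ⟨z j, hz j⟩) (factorsThrough_quotMk heq)

end OrbitSegments

section CappedPeriod

variable {X : Type*} {T : X → X}

/-- The length of the initial orbit segment of `x` up to its first return, cut off at `L`; it is `L`
when `x` is not periodic, where `minimalPeriod` takes the value `0`. -/
noncomputable def cappedPeriod (T : X → X) (L : ℕ) (x : X) : ℕ :=
  if minimalPeriod T x = 0 then L else min L (minimalPeriod T x)

/-- A closed superset of the set of points whose capped period is `m`: the points of period
`m`, or the whole space when the cap `L` is attained. -/
def cappedPtsOfPeriod (T : X → X) (L m : ℕ) : Set X :=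
  {x | m < L → IsPeriodicPt T m x}

theorem cappedPeriod_pos {L : ℕ} (hL : 0 < L) (x : X) : 0 < cappedPeriod T L x := by
  unfold cappedPeriod
  split_ifs <;> omega

theorem cappedPeriod_le (L : ℕ) (x : X) : cappedPeriod T L x ≤ L := by
  unfold cappedPeriod
  split_ifs <;> omega

theorem mem_cappedPtsOfPeriod_cappedPeriod (L : ℕ) (x : X) :
    x ∈ cappedPtsOfPeriod T L (cappedPeriod T L x) := by
  intro hlt
  unfold cappedPeriod at hlt ⊢
  split_ifs at hlt ⊢ with h
  · exact absurd hlt (lt_irrefl L)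
  · rw [min_eq_right (by omega)]
    exact isPeriodicPt_minimalPeriod T x

theorem iterate_injOn_Iio_cappedPeriod (hT : Injective T) (L : ℕ) (x : X) :
    (Iio (cappedPeriod T L x)).InjOn (T^[·] x) := by
  by_cases h : minimalPeriod T x = 0
  · have haper := minimalPeriod_eq_zero_iff_notMem_periodicPts.1 h
    have hne : ∀ i j, i < j → T^[i] x ≠ T^[j] x := fun i j hij heq => by
      refine haper (mk_mem_periodicPts (Nat.sub_pos_of_lt hij) (hT.iterate i ?_))
      rw [← iterate_add_apply, Nat.add_sub_cancel' hij.le, heq]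
    intro i _ j _ heq
    by_contra hij
    rcases Nat.lt_or_gt_of_ne hij with hlt | hlt
    exacts [hne i j hlt heq, hne j i hlt heq.symm]
  · refine iterate_injOn_Iio_minimalPeriod.mono (Iio_subset_Iio ?_)
    rw [cappedPeriod, if_neg h]
    exact min_le_right _ _

theorem iterate_mod_apply_of_mem_cappedPtsOfPeriod {L m : ℕ} (hm : m ≤ L) {x : X}
    (hx : x ∈ cappedPtsOfPeriod T L m) {i : ℕ} (hi : i < L) : T^[i % m] x = T^[i] x := by
  rcases hm.lt_or_eq with hlt | rfl
  · exact (hx hlt).iterate_mod_apply i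
  · rw [Nat.mod_eq_of_lt hi]

theorem isClosed_cappedPtsOfPeriod [TopologicalSpace X] [T2Space X] (hT : Continuous T)
    (L m : ℕ) : IsClosed (cappedPtsOfPeriod T L m) :=
  isClosed_imp isOpen_const (isClosed_eq (hT.iterate m) continuous_id)

theorem exists_covDimLE_cappedPtsOfPeriod [TopologicalSpace X] [T2Space X] (hT : Continuous T)
    {d : ℕ} (hX : CovDimLE X d)
    (hper : ∀ n : ℕ, 1 ≤ n → n ≤ 2 * d → 2 * covDim (periodicLE T n) < (n : ℕ∞))
    {L m : ℕ} (hL : 2 * d < L) (hm : 0 < m) :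
    ∃ D : ℕ, 2 * D < m ∧ CovDimLE (cappedPtsOfPeriod T L m) D := by
  have hclosed := isClosed_cappedPtsOfPeriod hT L m
  rcases le_or_gt m (2 * d) with hmd | hmd
  · have hlt := hper m hm hmd
    have hfin : covDim (periodicLE T m) ≠ ⊤ := fun htop => by
      rw [htop] at hlt
      simp at hlt
    obtain ⟨D, hD⟩ := ENat.ne_top_iff_exists.1 hfin
    rw [← hD] at hlt
    exact ⟨D, by exact_mod_cast hlt, (covDimLE_of_covDim_eq hD.symm).of_isClosed_subset hclosed
      fun x hx => ⟨m, hm, le_rfl, hx (by omega)⟩⟩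
  · exact ⟨d, hmd, hX.of_isClosedEmbedding hclosed.isClosedEmbedding_subtypeVal⟩

end CappedPeriod

section Separation

variable {X Y : Type*} [TopologicalSpace X] {T : X → X} {d : ℕ} {u v : Y → X}

/-- The observables whose delay map takes distinct values at `u y` and `v y`, for every `y ∈ S`. -/
def separatingObservables (T : X → X) (d : ℕ) (u v : Y → X) (S : Set Y) : Set C(X, I) :=
  {h | ∀ y ∈ S, delayMap T d h (u y) ≠ delayMap T d h (v y)}

theorem continuous_uncurry_delayMap [LocallyCompactSpace X] (hT : Continuous T) (d : ℕ) :
    Continuous fun p : C(X, I) × X => delayMap T d p.1 p.2 :=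
  continuous_pi fun i =>
    continuous_fst.eval ((hT.iterate i).comp continuous_snd)

theorem isOpen_separatingObservables [LocallyCompactSpace X] [TopologicalSpace Y]
    (hT : Continuous T) (hu : Continuous u) (hv : Continuous v) {K : Set Y} (hK : IsCompact K) :
    IsOpen (separatingObservables T d u v K) := by
  have hdelay := continuous_uncurry_delayMap hT d
  have hopen : IsOpen {p : C(X, I) × Y | delayMap T d p.1 (u p.2) ≠ delayMap T d p.1 (v p.2)} :=
    isOpen_ne_fun (hdelay.comp (continuous_fst.prodMk (hu.comp continuous_snd)))
      (hdelay.comp (continuous_fst.prodMk (hv.comp continuous_snd)))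
  exact isOpen_iff_eventually.2 fun h hh =>
    hK.eventually_forall_of_forall_eventually fun y hy => hopen.mem_nhds (hh y hy)

theorem separatingObservables_mem_residual_of_nhdsWithin {ι : Type*} [Countable ι]
    [LocallyCompactSpace X] [TopologicalSpace Y] [CompactSpace Y] [SecondCountableTopology Y]
    (hT : Continuous T) (hu : Continuous u) (hv : Continuous v) {S : Set Y} (τ : Y → ι)
    (hS : ∀ y ∈ S, ∃ K ∈ 𝓝[τ ⁻¹' {τ y}] y, IsClosed K ∧
      Dense (separatingObservables T d u v K)) :
    separatingObservables T d u v S ∈ residual C(X, I) := by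
  choose! K hKn hKc hKd using hS
  have hresidual : ∀ y ∈ S, separatingObservables T d u v (K y) ∈ residual C(X, I) := fun y hy =>
    residual_of_dense_open (isOpen_separatingObservables hT hu hv (hKc y hy).isCompact) (hKd y hy)
  have hcover : ∀ t, ∃ s ⊆ S ∩ τ ⁻¹' {t}, s.Countable ∧ S ∩ τ ⁻¹' {t} ⊆ ⋃ y ∈ s, K y := fun t =>
    TopologicalSpace.countable_cover_nhdsWithin fun y hy =>
      nhdsWithin_mono y (hy.2 ▸ inter_subset_right) (hKn y hy.1)
  choose s hsS hs hcov using hcover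
  have hall : ⋂ t, ⋂ y ∈ s t, separatingObservables T d u v (K y) ∈ residual C(X, I) :=
    countable_iInter_mem.2 fun t => (countable_bInter_mem (hs t)).2 fun y hy =>
      hresidual y (hsS t hy).1
  refine Filter.mem_of_superset hall fun h hh y hy => ?_
  obtain ⟨z, hz, hyz⟩ := mem_iUnion₂.1 (hcov (τ y) ⟨hy, rfl⟩)
  exact mem_iInter₂.1 (mem_iInter.1 hh (τ y)) z hz y hyz

theorem separatingObservables_mem_residual_of_matching {J : Type*} [Finite J] [Nonempty J]
    [CompactSpace X] [T2Space X] [TopologicalSpace Y] [CompactSpace Y] [SecondCountableTopology Y]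
    (hTc : Continuous T) (hTi : Injective T) (hX : CovDimLE X d)
    (hper : ∀ n : ℕ, 1 ≤ n → n ≤ 2 * d → 2 * covDim (periodicLE T n) < (n : ℕ∞))
    (hu : Continuous u) (hv : Continuous v) {x : J → Y → X} (hx : ∀ j, Continuous (x j)) {L : ℕ}
    (hL : 2 * d < L) {S : Set Y}
    (hinj : ∀ y ∈ S,
      Injective fun ν : Σ j, Fin (cappedPeriod T L (x j y)) => T^[ν.2] (x ν.1 y))
    (hmatch : ∀ y ∈ S, ∃ e : (Σ j, Fin (cappedPeriod T L (x j y))) →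
        Σ j, Fin (cappedPeriod T L (x j y)), (∀ ν, e ν ≠ ν) ∧
      ∀ w, (∀ j, x j w ∈ cappedPtsOfPeriod T L (cappedPeriod T L (x j y))) →
        ∀ h : C(X, I), delayMap T d h (u w) = delayMap T d h (v w) →
          ∀ ν, h (T^[(e ν).2] (x (e ν).1 w)) = h (T^[ν.2] (x ν.1 w))) :
    separatingObservables T d u v S ∈ residual C(X, I) := by
  refine separatingObservables_mem_residual_of_nhdsWithin hTc hu hv
    (fun y j => cappedPeriod T L (x j y)) fun y hy => ?_
  let P : J → Set X := fun j => cappedPtsOfPeriod T L (cappedPeriod T L (x j y))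
  have hP : ∀ j, IsClosed (P j) := fun j => isClosed_cappedPtsOfPeriod hTc _ _
  choose D hDm hD using fun j =>
    exists_covDimLE_cappedPtsOfPeriod hTc hX hper hL (cappedPeriod_pos (L := L) (by omega) (x j y))
  obtain ⟨e, he, hmatch⟩ := hmatch y hy
  obtain ⟨B, hBx, hBc, hdense⟩ := exists_isClosed_nhds_dense_setOf_exists_ne hP hD
    (fun j => by simpa using hDm j) (g := fun ν => T^[ν.2]) (fun ν => hTc.iterate _)
    (fun ν => hTi.iterate _) (x := fun j => x j y) (hinj y hy) he
  refine ⟨⋂ j, x j ⁻¹' (B j ∩ P j), Filter.iInter_mem.2 fun j => Filter.inter_mem ?_ ?_,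
    isClosed_iInter fun j => ((hBc j).inter (hP j)).preimage (hx j),
    hdense.mono fun h hh w hw heq => ?_⟩
  · exact mem_nhdsWithin_of_mem_nhds ((hx j).continuousAt (hBx j))
  · refine Filter.mem_of_superset self_mem_nhdsWithin fun w hw => ?_
    have hwy : cappedPeriod T L (x j w) = cappedPeriod T L (x j y) := congrFun hw j
    change x j w ∈ cappedPtsOfPeriod T L (cappedPeriod T L (x j y))
    exact hwy ▸ mem_cappedPtsOfPeriod_cappedPeriod L (x j w)
  · rw [mem_iInter] at hw
    obtain ⟨ν, hν⟩ := hh (fun j => x j w) hw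
    exact hν (hmatch w (fun j => (hw j).2) h heq ν)

theorem separatingObservables_fst_snd_mem_residual [CompactSpace X] [T2Space X]
    [SecondCountableTopology X] (hTc : Continuous T) (hTi : Injective T) (hX : CovDimLE X d)
    (hper : ∀ n : ℕ, 1 ≤ n → n ≤ 2 * d → 2 * covDim (periodicLE T n) < (n : ℕ∞)) :
    separatingObservables T d Prod.fst Prod.snd
      {p | ∀ i ≤ 2 * d, ∀ j ≤ 2 * d, T^[i] p.1 ≠ T^[j] p.2} ∈ residual C(X, I) := by
  have hlt {p : X × X} {b : Bool} (i : Fin (cappedPeriod T (2 * d + 1) (cond b p.1 p.2))) :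
      i < 2 * d + 1 := i.2.trans_le (cappedPeriod_le _ _)
  refine separatingObservables_mem_residual_of_matching hTc hTi hX hper continuous_fst
    continuous_snd (x := fun b p => cond b p.1 p.2) (L := 2 * d + 1)
    (Bool.forall_bool.2 ⟨continuous_snd, continuous_fst⟩) (by omega) (fun p hp => ?_)
    fun p _ => ⟨fun ν => ⟨!ν.1, ν.2 % cappedPeriod T (2 * d + 1) (cond (!ν.1) p.1 p.2),
      Nat.mod_lt _ (cappedPeriod_pos (by omega) _)⟩, fun ν hν => ?_, fun w hw h hh ν => ?_⟩
  · rintro ⟨b, i⟩ ⟨b', j⟩ hij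
    obtain rfl : b = b' := by
      have hi := hlt i
      have hj := hlt j
      cases b <;> cases b'
      · rfl
      · exact absurd hij.symm (hp j (by omega) i (by omega))
      · exact absurd hij (hp i (by omega) j (by omega))
      · rfl
    exact congrArg (Sigma.mk b) (Fin.ext (iterate_injOn_Iio_cappedPeriod hTi _ _ i.2 j.2 hij))
  · simpa using congrArg Sigma.fst hν
  · obtain ⟨b, i⟩ := ν
    have hval : h (T^[i] w.1) = h (T^[i] w.2) := congrFun hh ⟨i, hlt i⟩
    rw [iterate_mod_apply_of_mem_cappedPtsOfPeriod (cappedPeriod_le _ _) (hw !b) (hlt i)]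
    cases b
    exacts [hval, hval.symm]

theorem exists_fixedPointFree_shift {m n k : ℕ} (hm : 0 < m) (hmk : ¬ m ∣ k) (hkn : k ≤ n) :
    ∃ e : Fin m → Fin m, (∀ i, e i ≠ i) ∧
      ∀ i : Fin m, (i ≤ n ∧ (e i : ℕ) = (i + k) % m) ∨ (e i : ℕ) + k = i := by
  have hk : k ≠ 0 := fun h => hmk (h ▸ dvd_zero m)
  refine ⟨fun i => if (i : ℕ) ≤ n then ⟨(i + k) % m, Nat.mod_lt _ hm⟩ else ⟨i - k, by omega⟩,
    fun i hi => ?_, fun i => ?_⟩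
  · dsimp only at hi
    split_ifs at hi with hin
    · refine hmk (Nat.modEq_zero_iff_dvd.1 (Nat.ModEq.add_left_cancel' i ?_))
      have hmod : (i + k) % m = i := Fin.ext_iff.1 hi
      rw [Nat.ModEq, hmod, add_zero, Nat.mod_eq_of_lt i.2]
    · have hsub : (i : ℕ) - k = i := Fin.ext_iff.1 hi
      omega
  · dsimp only
    split_ifs with hin
    · exact Or.inl ⟨hin, rfl⟩
    · exact Or.inr (Nat.sub_add_cancel (by omega))

theorem separatingObservables_iterate_mem_residual [CompactSpace X] [T2Space X]
    [SecondCountableTopology X] (hTc : Continuous T) (hTi : Injective T) (hX : CovDimLE X d)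
    (hper : ∀ n : ℕ, 1 ≤ n → n ≤ 2 * d → 2 * covDim (periodicLE T n) < (n : ℕ∞))
    {k : ℕ} (hk : k ≤ 2 * d) :
    separatingObservables T d id T^[k] {x | T^[k] x ≠ x} ∈ residual C(X, I) := by
  refine separatingObservables_mem_residual_of_matching hTc hTi hX hper continuous_id
    (hTc.iterate k) (x := fun (_ : Unit) x => x) (L := 2 * d + k + 1) (fun _ => continuous_id)
    (by omega) (fun x _ => ?_) fun x hx => ?_
  · rintro ⟨_, i⟩ ⟨_, j⟩ hij
    exact congrArg (Sigma.mk ()) (Fin.ext (iterate_injOn_Iio_cappedPeriod hTi _ _ i.2 j.2 hij))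
  have hle := cappedPeriod_le (T := T) (2 * d + k + 1) x
  have hndvd : ¬ cappedPeriod T (2 * d + k + 1) x ∣ k := fun hdvd => hx <| by
    rw [← iterate_mod_apply_of_mem_cappedPtsOfPeriod hle
      (mem_cappedPtsOfPeriod_cappedPeriod _ x) (show k < 2 * d + k + 1 by omega),
      Nat.mod_eq_zero_of_dvd hdvd, iterate_zero_apply]
  obtain ⟨e, he, hshift⟩ := exists_fixedPointFree_shift (cappedPeriod_pos (by omega) x) hndvd hk
  refine ⟨fun ν => ⟨(), e ν.2⟩, fun ν hν => he ν.2 (eq_of_heq (Sigma.mk.inj hν).2),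
    fun w hw h hh ν => ?_⟩
  have hval : ∀ i ≤ 2 * d, h (T^[i] w) = h (T^[i + k] w) := fun i hi => by
    rw [iterate_add_apply]
    exact congrFun hh ⟨i, Nat.lt_succ_of_le hi⟩
  have := ν.2.2
  change h (T^[e ν.2] w) = h (T^[ν.2] w)
  rcases hshift ν.2 with ⟨hi, hei⟩ | hei
  · rw [hei, iterate_mod_apply_of_mem_cappedPtsOfPeriod hle (hw ()) (by omega), hval ν.2 hi]
  · rw [hval (e ν.2) (by omega), hei]

theorem injective_delayMap_of_mem_separatingObservables (hT : Injective T) {h : C(X, I)}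
    (hdisjoint : h ∈ separatingObservables T d Prod.fst Prod.snd
      {p | ∀ i ≤ 2 * d, ∀ j ≤ 2 * d, T^[i] p.1 ≠ T^[j] p.2})
    (hiterate : ∀ k ≤ 2 * d, h ∈ separatingObservables T d id T^[k] {x | T^[k] x ≠ x}) :
    Injective (delayMap T d h) := by
  intro x y hxy
  by_contra hne
  by_cases hdisj : ∀ i ≤ 2 * d, ∀ j ≤ 2 * d, T^[i] x ≠ T^[j] y
  · exact hdisjoint (x, y) hdisj hxy
  · push Not at hdisj
    obtain ⟨i, hi, j, hj, hij⟩ := hdisj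
    obtain ⟨k, hk, rfl | rfl⟩ := exists_iterate_eq_of_iterate_eq_iterate hT hi hj hij
    · exact hiterate k hk x (Ne.symm hne) hxy
    · exact hiterate k hk y hne hxy.symm

end Separation

theorem stmt10 {X : Type*} [MetricSpace X] [CompactSpace X]
    (T : X → X) (hTc : Continuous T) (hTi : Function.Injective T)
    (d : ℕ) (hdim : covDim X = d)
    (hper : ∀ n : ℕ, 1 ≤ n → n ≤ 2 * d →
      2 * covDim (periodicLE T n) < (n : ℕ∞)) :
    ∃ G : Set C(X, I), IsGδ G ∧ Dense G ∧
      G ⊆ {h : C(X, I) | IsEmbedding (delayMap T d h)} := by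
  have hX := covDimLE_of_covDim_eq hdim
  have hdisjoint := separatingObservables_fst_snd_mem_residual hTc hTi hX hper
  have hiterate : ∀ᶠ h in residual C(X, I), ∀ k ∈ Iic (2 * d),
      h ∈ separatingObservables T d id T^[k] {x | T^[k] x ≠ x} :=
    (Filter.eventually_all_finite (finite_Iic _)).2 fun k hk =>
      separatingObservables_iterate_mem_residual hTc hTi hX hper hk
  have hembedding : ∀ᶠ h in residual C(X, I), IsEmbedding (delayMap T d h) := by
    filter_upwards [hdisjoint, hiterate] with h hdisj hiter
    have hcont : Continuous (delayMap T d h) :=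
      (continuous_uncurry_delayMap hTc d).comp (continuous_const.prodMk continuous_id)
    have hinj := injective_delayMap_of_mem_separatingObservables hTi hdisj hiter
    exact (hcont.isClosedEmbedding hinj).isEmbedding
  obtain ⟨G, hsub, hGδ, hdense⟩ := mem_residual.1 hembedding
  exact ⟨G, hGδ, hdense, hsub⟩
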